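/- arXiv:0809.0086 — 4 statements merged into one kernel-verified Lean document; each statement's English description precedes it below -/
import Mathlib

section
/- Let R be a commutative ring, n a positive integer, and A = (a_{ij}) an invertible symmetric n×n matrix over R with inverse (a^{ij}). Define D_i on R[x_1,…,x_n] by D_i(g) = Σ_j a^{ij} ∂g/∂x_j + x_i·g. Then for every 0 ≤ s ≤ n, the composite of the inclusion R[x_{s+1},…,x_n] ↪ R[x_1,…,x_n] with the quotient map R[x_1,…,x_n] → R[x_1,…,x_n] / (D_1(R[x_1,…,x_n]) + ⋯ + D_s(R[x_1,…,x_n])) is an isomorphism of R-modules. In particular, for s = n the quotient R[x_1,…,x_n] / (Σ_{i=1}^n D_i(R[x_1,…,x_n])) is isomorphic to R, generated by the class of the constant polynomial 1. -/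
/-!
Over `ℚ` one would conjugate by the Gaussian operator `exp (½ ∑ a^{ij} ∂ᵢ ∂ⱼ)`. It is available over
every commutative ring: the operators `Dᵢ` commute because `(a^{ij})` is symmetric, so
`p ↦ p(D) 1` is a well-defined linear endomorphism of `R[x]`, and it carries multiplication by
`xᵢ` to `Dᵢ`. It commutes with derivations with constant coefficients; hence composing these maps
adds the matrices, and the map for `-(a^{ij})` is the inverse. This automorphism preserves
`R[x_{s+1},…,x_n]` and carries the ideal `(x_1,…,x_s)` to `D_1(R[x]) + ⋯ + D_s(R[x])`, so the
statement reduces to `R[x] = R[x_{s+1},…,x_n] ⊕ (x_1,…,x_s)`.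
-/

open MvPolynomial

noncomputable section

/-- The operator `D_i(g) = Σ_j a^{ij} ∂g/∂x_j + x_i·g` on `R[x_1,…,x_n]`,
where `B = (a^{ij})` is the inverse matrix of `A`. -/
def Dop {n : ℕ} {R : Type*} [CommRing R] (B : Matrix (Fin n) (Fin n) R)
    (i : Fin n) (g : MvPolynomial (Fin n) R) : MvPolynomial (Fin n) R :=
  (∑ j, C (B i j) * pderiv j g) + X i * g

/-- The `R`-submodule `D_1(R[x]) + ⋯ + D_s(R[x])` of `R[x_1,…,x_n]` generated by
the images of the operators `D_i` for `i < s` (indices `0,…,s-1` of `Fin n`). -/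
def DopSpan {n : ℕ} {R : Type*} [CommRing R] (B : Matrix (Fin n) (Fin n) R)
    (s : ℕ) : Submodule R (MvPolynomial (Fin n) R) :=
  Submodule.span R
    {p | ∃ (i : Fin n) (g : MvPolynomial (Fin n) R), (i : ℕ) < s ∧ p = Dop B i g}

lemma bijective_mkQ_comp_of_isCompl_range {R M N : Type*} [Ring R] [AddCommGroup M] [Module R M]
    [AddCommGroup N] [Module R N] {f : N →ₗ[R] M} {q : Submodule R M}
    (hf : Function.Injective f) (hq : IsCompl (LinearMap.range f) q) :
    Function.Bijective (q.mkQ ∘ₗ f) := by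
  constructor
  · rw [← LinearMap.ker_eq_bot, LinearMap.ker_comp, Submodule.ker_mkQ, eq_bot_iff]
    intro x hx
    exact hf (Submodule.disjoint_def.1 hq.disjoint _ ⟨x, rfl⟩ hx |>.trans (map_zero f).symm)
  · rw [← LinearMap.range_eq_top, LinearMap.range_comp, Submodule.map_mkQ_eq_top, sup_comm]
    exact hq.sup_eq_top

section CommSemiring

variable {σ R : Type*} [CommSemiring R]

lemma linearMap_ext_X_mul {M : Type*} [AddCommMonoid M] [Module R M]
    {f g : MvPolynomial σ R →ₗ[R] M} (h_one : f 1 = g 1)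
    (h_X_mul : ∀ i p, f p = g p → f (X i * p) = g (X i * p)) : f = g := by
  refine LinearMap.ext fun p ↦ ?_
  induction p using MvPolynomial.induction_on with
  | C r => rw [← mul_one (C r), ← smul_eq_C_mul, map_smul, map_smul, h_one]
  | add p q hp hq => rw [map_add, map_add, hp, hq]
  | mul_X p i hp => rw [mul_comm, h_X_mul i p hp]

/-- Evaluation of polynomials at a family of commuting elements of an algebra which, unlike in
`MvPolynomial.aeval`, need not be commutative. -/
def aevalOfCommute {A : Type*} [Semiring A] [Algebra R A] (a : σ → A)
    (ha : ∀ i j, Commute (a i) (a j)) : MvPolynomial σ R →ₐ[R] A :=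
  let S := Algebra.adjoin R (Set.range a)
  have : IsMulCommutative S := Algebra.isMulCommutative_adjoin R <| by
    rintro _ ⟨i, rfl⟩ _ ⟨j, rfl⟩
    exact ha i j
  open scoped IsMulCommutative in
  S.val.comp (aeval fun i ↦ (⟨a i, Algebra.subset_adjoin ⟨i, rfl⟩⟩ : S))

lemma aevalOfCommute_X {A : Type*} [Semiring A] [Algebra R A] (a : σ → A)
    (ha : ∀ i j, Commute (a i) (a j)) (i : σ) :
    aevalOfCommute (R := R) a ha (X i) = a i := by
  simp [aevalOfCommute]

/-- The derivation `∑ⱼ vⱼ ∂/∂xⱼ` with constant coefficients. It is given by its values on the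
variables, so that no finiteness of `σ` is needed. -/
def constDeriv (v : σ → R) : Derivation R (MvPolynomial σ R) (MvPolynomial σ R) :=
  mkDerivation R fun j ↦ C (v j)

lemma constDeriv_X_mul (v : σ → R) (i : σ) (p : MvPolynomial σ R) :
    constDeriv v (X i * p) = X i * constDeriv v p + v i • p := by
  rw [Derivation.leibniz, constDeriv, mkDerivation_X, smul_eq_mul, smul_eq_mul, smul_eq_C_mul,
    mul_comm p]

lemma constDeriv_add (v w : σ → R) : constDeriv (v + w) = constDeriv v + constDeriv w :=
  derivation_ext fun i ↦ by simp [constDeriv]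

lemma constDeriv_zero : constDeriv (0 : σ → R) = 0 :=
  derivation_ext fun i ↦ by simp [constDeriv]

lemma constDeriv_apply_eq_sum_pderiv [Fintype σ] (v : σ → R) (p : MvPolynomial σ R) :
    constDeriv v p = ∑ j, C (v j) * pderiv j p := by
  classical
  have h_sum (q : MvPolynomial σ R) :
      (∑ j, v j • pderiv j : Derivation R _ _) q = ∑ j, C (v j) * pderiv j q := by
    rw [← Derivation.coeFnAddMonoidHom_apply, map_sum, Finset.sum_apply]
    simp [smul_eq_C_mul]
  rw [← h_sum]
  refine DFunLike.congr_fun (derivation_ext fun i ↦ ?_) p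
  rw [h_sum]
  simp [constDeriv, pderiv_X, Pi.single_apply]

lemma constDeriv_comm (v w : σ → R) (p : MvPolynomial σ R) :
    constDeriv v (constDeriv w p) = constDeriv w (constDeriv v p) := by
  suffices (constDeriv v).toLinearMap ∘ₗ (constDeriv w).toLinearMap =
      (constDeriv w).toLinearMap ∘ₗ (constDeriv v).toLinearMap from LinearMap.congr_fun this p
  refine linearMap_ext_X_mul (by simp) fun i q hq ↦ ?_
  simp only [LinearMap.comp_apply, Derivation.coeFn_coe] at hq ⊢
  simp only [constDeriv_X_mul, map_add, Derivation.map_smul, hq]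
  ring

lemma derivation_mem_supported {D : Derivation R (MvPolynomial σ R) (MvPolynomial σ R)}
    {S : Set σ} (hD : ∀ i ∈ S, D (X i) ∈ supported R S) {p : MvPolynomial σ R}
    (hp : p ∈ supported R S) : D p ∈ supported R S := by
  induction hp using Algebra.adjoin_induction with
  | mem _ hx =>
    obtain ⟨i, hi, rfl⟩ := hx
    exact hD i hi
  | algebraMap r => simp
  | add p q _ _ hp hq => rw [map_add]; exact add_mem hp hq
  | mul p q hp hq hDp hDq =>
    rw [Derivation.leibniz]
    exact add_mem (mul_mem hp hDq) (mul_mem hq hDp)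

lemma constDeriv_mem_supported (v : σ → R) {S : Set σ} {p : MvPolynomial σ R}
    (hp : p ∈ supported R S) : constDeriv v p ∈ supported R S := by
  refine derivation_mem_supported (fun i _ ↦ ?_) hp
  rw [constDeriv, mkDerivation_X]
  exact (supported R S).algebraMap_mem (v i)

/-- The twisted operator `g ↦ ∑ⱼ Bᵢⱼ ∂g/∂xⱼ + xᵢ g`, in variables indexed by an arbitrary type. -/
def twistedOp (B : Matrix σ σ R) (i : σ) : Module.End R (MvPolynomial σ R) :=
  (constDeriv (B i)).toLinearMap + LinearMap.mulLeft R (X i)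

lemma twistedOp_apply (B : Matrix σ σ R) (i : σ) (p : MvPolynomial σ R) :
    twistedOp B i p = constDeriv (B i) p + X i * p :=
  rfl

lemma twistedOp_zero (i : σ) : twistedOp (0 : Matrix σ σ R) i = LinearMap.mulLeft R (X i) := by
  have h_row : (0 : Matrix σ σ R) i = 0 := rfl
  refine LinearMap.ext fun p ↦ ?_
  simp [twistedOp_apply, h_row, constDeriv_zero]

lemma twistedOp_commute {B : Matrix σ σ R} (hB : B.IsSymm) (i j : σ) :
    Commute (twistedOp B i) (twistedOp B j) := by
  refine LinearMap.ext fun p ↦ ?_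
  simp only [Module.End.mul_apply, twistedOp_apply, map_add, constDeriv_X_mul,
    constDeriv_comm (B i) (B j), hB.apply j i]
  ring

lemma twistedOp_mem_supported (B : Matrix σ σ R) {S : Set σ} {i : σ} (hi : i ∈ S)
    {p : MvPolynomial σ R} (hp : p ∈ supported R S) : twistedOp B i p ∈ supported R S :=
  add_mem (constDeriv_mem_supported (B i) hp) (mul_mem (Algebra.subset_adjoin ⟨i, hi, rfl⟩) hp)

/-- The linear map `p ↦ p(D) 1`, where `D = (Dᵢ)` are the twisted operators of a symmetric
matrix `B`. For `B = -1` it sends monomials to products of Hermite polynomials. -/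
def hermiteMap {B : Matrix σ σ R} (hB : B.IsSymm) : Module.End R (MvPolynomial σ R) :=
  LinearMap.applyₗ 1 ∘ₗ (aevalOfCommute (twistedOp B) (twistedOp_commute hB)).toLinearMap

section hermiteMap

variable {B : Matrix σ σ R} (hB : B.IsSymm)

lemma hermiteMap_one : hermiteMap hB 1 = 1 := by
  simp [hermiteMap]

lemma hermiteMap_X_mul (i : σ) (p : MvPolynomial σ R) :
    hermiteMap hB (X i * p) = twistedOp B i (hermiteMap hB p) := by
  simp [hermiteMap, aevalOfCommute_X]

lemma hermiteMap_constDeriv (v : σ → R) (p : MvPolynomial σ R) :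
    hermiteMap hB (constDeriv v p) = constDeriv v (hermiteMap hB p) := by
  suffices hermiteMap hB ∘ₗ (constDeriv v).toLinearMap =
      (constDeriv v).toLinearMap ∘ₗ hermiteMap hB from LinearMap.congr_fun this p
  refine linearMap_ext_X_mul (by simp [hermiteMap_one]) fun i q hq ↦ ?_
  simp only [LinearMap.comp_apply, Derivation.coeFn_coe] at hq ⊢
  simp only [constDeriv_X_mul, hermiteMap_X_mul, twistedOp_apply, map_add, map_smul, hq,
    constDeriv_comm (B i) v]
  ring

lemma hermiteMap_twistedOp (B' : Matrix σ σ R) (i : σ) (p : MvPolynomial σ R) :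
    hermiteMap hB (twistedOp B' i p) = twistedOp (B + B') i (hermiteMap hB p) := by
  have h_row : (B + B') i = B i + B' i := rfl
  simp only [twistedOp_apply, map_add, hermiteMap_constDeriv, hermiteMap_X_mul, h_row,
    constDeriv_add, Derivation.add_apply]
  ring

lemma hermiteMap_comp_hermiteMap_of_add_eq_zero {B' : Matrix σ σ R} (hB' : B'.IsSymm)
    (h : B + B' = 0) :
    hermiteMap hB ∘ₗ hermiteMap hB' = LinearMap.id := by
  refine linearMap_ext_X_mul (by simp [hermiteMap_one]) fun i p hp ↦ ?_
  rw [LinearMap.comp_apply, LinearMap.id_apply] at hp ⊢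
  rw [hermiteMap_X_mul, hermiteMap_twistedOp, h, hp, twistedOp_zero, LinearMap.mulLeft_apply]

lemma hermiteMap_mem_supported {S : Set σ} {p : MvPolynomial σ R} (hp : p ∈ supported R S) :
    hermiteMap hB p ∈ supported R S := by
  rw [supported_eq_range_rename] at hp
  obtain ⟨q, rfl⟩ := (rename ((↑) : S → σ)).mem_range.1 hp
  clear hp
  induction q using MvPolynomial.induction_on with
  | C r =>
    rw [rename_C, ← mul_one (C r), ← smul_eq_C_mul, map_smul, hermiteMap_one]
    exact (supported R S).smul_mem (one_mem _) r
  | add p q hp hq =>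
    rw [map_add, map_add]
    exact add_mem hp hq
  | mul_X p i hp =>
    rw [mul_comm, map_mul, rename_X, hermiteMap_X_mul]
    exact twistedOp_mem_supported B i.2 hp

end hermiteMap

/-- The submodule `∑_{i ∈ T} Dᵢ(R[x])` generated by the images of the twisted operators with
index in `T`. -/
def twistedRange (B : Matrix σ σ R) (T : Set σ) : Submodule R (MvPolynomial σ R) :=
  ⨆ i ∈ T, LinearMap.range (twistedOp B i)

lemma twistedRange_zero (T : Set σ) :
    twistedRange (0 : Matrix σ σ R) T = (Ideal.span (X '' T)).restrictScalars R := by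
  have h_range (i : σ) : LinearMap.range (twistedOp (0 : Matrix σ σ R) i) =
      (Ideal.span {X i}).restrictScalars R := by
    ext p
    simp [twistedOp_zero, Ideal.mem_span_singleton', mul_comm]
  rw [Ideal.span, Submodule.span_eq_iSup_of_singleton_spans, iSup_image]
  simp only [twistedRange, h_range, Submodule.restrictScalars_iSup]

lemma isCompl_supported_span_X_image_compl (S : Set σ) :
    IsCompl (Subalgebra.toSubmodule (supported R S))
      ((Ideal.span (X '' Sᶜ)).restrictScalars R) := by
  have h_supported : Subalgebra.toSubmodule (supported R S) =
      restrictSupport R {m | ∀ i ∉ S, m i = 0} := by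
    ext p
    simp only [Subalgebra.mem_toSubmodule, mem_supported, mem_restrictSupport_iff, Set.subset_def,
      Finset.mem_coe, mem_vars_iff_mem_support, Set.mem_ofPred_eq, Finsupp.mem_support_iff]
    grind
  have h_span : (Ideal.span (X '' Sᶜ)).restrictScalars R =
      restrictSupport R {m : σ →₀ ℕ | ∀ i ∉ S, m i = 0}ᶜ := by
    ext p
    simp [mem_ideal_span_X_image, mem_restrictSupport_iff, Set.subset_def]
  rw [h_supported, h_span, restrictSupport_eq_span, restrictSupport_eq_span]
  simpa using! (basisMonomials σ R).linearIndependent.isCompl_span_image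
    (basisMonomials σ R).span_eq isCompl_compl

end CommSemiring

section CommRing

variable {σ R : Type*} [CommRing R] {B : Matrix σ σ R}

/-- `hermiteMap` as a linear automorphism. -/
def hermiteEquiv (hB : B.IsSymm) : MvPolynomial σ R ≃ₗ[R] MvPolynomial σ R :=
  .ofLinearMap (hermiteMap hB) (hermiteMap hB.neg)
    (hermiteMap_comp_hermiteMap_of_add_eq_zero hB hB.neg (add_neg_cancel B))
    (hermiteMap_comp_hermiteMap_of_add_eq_zero hB.neg hB (neg_add_cancel B))

lemma map_hermiteEquiv_supported (hB : B.IsSymm) (S : Set σ) :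
    (Subalgebra.toSubmodule (supported R S)).map (hermiteEquiv hB).toLinearMap =
      Subalgebra.toSubmodule (supported R S) := by
  refine le_antisymm ?_ fun p hp ↦ ?_
  · rintro _ ⟨p, hp, rfl⟩
    exact hermiteMap_mem_supported hB hp
  · exact ⟨_, hermiteMap_mem_supported hB.neg hp, (hermiteEquiv hB).apply_symm_apply p⟩

lemma map_hermiteEquiv_twistedRange (hB : B.IsSymm) (B' : Matrix σ σ R) (T : Set σ) :
    (twistedRange B' T).map (hermiteEquiv hB).toLinearMap = twistedRange (B + B') T := by
  have h_comp (i : σ) : (hermiteEquiv hB).toLinearMap ∘ₗ twistedOp B' i =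
      twistedOp (B + B') i ∘ₗ (hermiteEquiv hB).toLinearMap :=
    LinearMap.ext (hermiteMap_twistedOp hB B' i)
  simp only [twistedRange, Submodule.map_iSup, ← LinearMap.range_comp, h_comp,
    LinearEquiv.range_comp]

theorem isCompl_supported_twistedRange_compl (hB : B.IsSymm) (S : Set σ) :
    IsCompl (Subalgebra.toSubmodule (supported R S)) (twistedRange B Sᶜ) := by
  have h := (Submodule.orderIsoMapComap (hermiteEquiv hB)).isCompl
    (isCompl_supported_span_X_image_compl S)
  rwa [← twistedRange_zero, Submodule.orderIsoMapComap_apply, Submodule.orderIsoMapComap_apply,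
    map_hermiteEquiv_supported, map_hermiteEquiv_twistedRange, add_zero] at h

theorem bijective_mkQ_twistedRange_comp_rename (hB : B.IsSymm) (S : Set σ) :
    Function.Bijective ((twistedRange B Sᶜ).mkQ ∘ₗ
      (rename (Subtype.val : S → σ)).toLinearMap) := by
  refine bijective_mkQ_comp_of_isCompl_range (rename_injective _ Subtype.val_injective) ?_
  have := isCompl_supported_twistedRange_compl hB S
  rwa [supported_eq_range_rename] at this

theorem bijective_smul_mkQ_twistedRange_univ_one (hB : B.IsSymm) :
    Function.Bijective fun r : R ↦ r • (twistedRange B Set.univ).mkQ 1 := by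
  have h_rename := bijective_mkQ_twistedRange_comp_rename hB ∅
  rw [Set.compl_empty] at h_rename
  have h_C : Function.Bijective (C : R → MvPolynomial (∅ : Set σ) R) :=
    ⟨C_injective _ R, C_surjective _⟩
  convert h_rename.comp h_C using 2 with r
  rw [← map_smul, smul_eq_C_mul, mul_one]
  simp

end CommRing

section Dop

variable {n : ℕ} {R : Type*} [CommRing R] (B : Matrix (Fin n) (Fin n) R)

lemma Dop_eq_twistedOp (i : Fin n) : Dop B i = twistedOp B i := by
  ext1 g
  rw [Dop, twistedOp_apply, constDeriv_apply_eq_sum_pderiv]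

lemma DopSpan_eq_twistedRange (s : ℕ) :
    DopSpan B s = twistedRange B {i : Fin n | s ≤ (i : ℕ)}ᶜ := by
  refine le_antisymm (Submodule.span_le.2 ?_) (iSup₂_le fun i hi ↦ ?_)
  · rintro _ ⟨i, g, hi, rfl⟩
    rw [Dop_eq_twistedOp]
    exact Submodule.mem_iSup_of_mem i (Submodule.mem_iSup_of_mem (not_le.2 hi) ⟨g, rfl⟩)
  · rintro _ ⟨g, rfl⟩
    exact Submodule.subset_span ⟨i, g, not_le.1 hi, by rw [Dop_eq_twistedOp]⟩

end Dop

theorem quotient_by_twisted_operators_general {σ R : Type*} [CommRing R] {B : Matrix σ σ R}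
    (hB : B.IsSymm) :
    (∀ S : Set σ, Function.Bijective
      ((twistedRange B Sᶜ).mkQ ∘ₗ (rename (Subtype.val : S → σ)).toLinearMap)) ∧
    Function.Bijective fun r : R ↦ r • (twistedRange B Set.univ).mkQ 1 :=
  ⟨bijective_mkQ_twistedRange_comp_rename hB, bijective_smul_mkQ_twistedRange_univ_one hB⟩

/-- Let `A` be an invertible symmetric `n×n` matrix over a
commutative ring `R` with inverse `B = (a^{ij})` and let
`D_i(g) = Σ_j a^{ij} ∂g/∂x_j + x_i·g`.  For every `0 ≤ s ≤ n` the composite of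
the inclusion `R[x_{s+1},…,x_n] ↪ R[x_1,…,x_n]` with the quotient map
`R[x_1,…,x_n] → R[x_1,…,x_n]/(D_1(R[x]) + ⋯ + D_s(R[x]))` is an isomorphism of
`R`-modules; in particular for `s = n` the quotient is isomorphic to `R`,
generated by the class of the constant polynomial `1`. -/
theorem quotient_by_twisted_operators {R : Type*} [CommRing R] {n : ℕ}
    (hn : 0 < n) (A B : Matrix (Fin n) (Fin n) R) (hsymm : A.IsSymm)
    (hAB : A * B = 1) (hBA : B * A = 1) :
    (∀ s : ℕ, s ≤ n →
      Function.Bijective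
        ((DopSpan B s).mkQ.comp
          (MvPolynomial.rename
            (Subtype.val : {i : Fin n // s ≤ (i : ℕ)} → Fin n)).toLinearMap)) ∧
    (∀ y : MvPolynomial (Fin n) R ⧸ DopSpan B n,
      ∃ r : R, y = r • (DopSpan B n).mkQ 1) := by
  have hB : B.IsSymm := Matrix.inv_eq_right_inv hAB ▸ hsymm.inv
  obtain ⟨h_rename, h_one⟩ := quotient_by_twisted_operators_general hB
  refine ⟨fun s _ ↦ ?_, ?_⟩
  · rw [DopSpan_eq_twistedRange]
    exact h_rename {i : Fin n | s ≤ (i : ℕ)}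
  · have h_univ : {i : Fin n | n ≤ (i : ℕ)}ᶜ = Set.univ := Set.eq_univ_of_forall fun i ↦ i.2.not_ge
    rw [DopSpan_eq_twistedRange, h_univ]
    exact fun y ↦ (h_one.surjective y).imp fun _ ↦ Eq.symm

end
end

section
/- Let R be a commutative ring, n a positive integer, and A an invertible symmetric n×n matrix over R. Let f = ½xᵗAx, so that df denotes the closed polynomial 1-form Σ_{a,b} A_{ab} x_b dx_a. Then the twisted de Rham cohomology H^k_f(R), i.e., the cohomology of the complex of polynomial differential forms on R^n with differential d_f ω = dω + df∧ω, is concentrated in degree n: H^k_f(R) = 0 for k ≠ n, and H^n_f(R) is isomorphic to R, generated by the class of the form dx_1∧⋯∧dx_n. -/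
/-!
The operators `∇_i = ∂_i + (df)_i` commute because `A` is symmetric, so `x_i ↦ ∇_i` makes the
polynomial ring a module over `R[x_1, …, x_n]`, and `Θ p = p(∇) 1` satisfies `Θ x_i = ∇_i Θ`.
Bijectivity of `Θ` needs no degree argument: `Θ⁻¹` is the transformation of the same kind built from
`A⁻¹` and `-∂_i`, as follows from `∂_i Θ = Θ ∑_j A_ij ∂_j`.

Applying `Θ` to coefficients identifies the Koszul complex of `x_1, …, x_n` with the twisted de Rham
complex. In the Koszul complex, division by `x_i` is a homotopy between the identity and the
projection that sets `x_i = 0` and keeps the terms containing `dx_i`; the composite of these `n`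
projections retains only the constant term of the coefficient of `dx_1 ∧ ⋯ ∧ dx_n`.
-/

open MvPolynomial

noncomputable section

/-- Polynomial differential forms on `K^n`: a form assigns to each subset
`s ⊆ {1,…,n}` (the indices of `dx_{i_1} ∧ ⋯ ∧ dx_{i_k}` with `i_1 < ⋯ < i_k`)
a polynomial coefficient. -/
abbrev Form (n : ℕ) (K : Type*) [CommRing K] :=
  Finset (Fin n) → MvPolynomial (Fin n) K

/-- The sign `(-1)^{#{j ∈ s | j < i}}`. -/
def sgn {n : ℕ} (K : Type*) [CommRing K] (s : Finset (Fin n)) (i : Fin n) :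
    MvPolynomial (Fin n) K :=
  (-1) ^ (s.filter (fun j => j < i)).card

/-- The twisted de Rham differential `d_α ω = dω + α ∧ ω` associated to a
(closed) polynomial 1-form `α = Σ_i α_i dx_i`. -/
def dTwist {n : ℕ} {K : Type*} [CommRing K]
    (α : Fin n → MvPolynomial (Fin n) K) :
    Form n K →ₗ[K] Form n K where
  toFun ω := fun s => ∑ i ∈ s,
    sgn K s i * (pderiv i (ω (s.erase i)) + α i * ω (s.erase i))
  map_add' ω₁ ω₂ := by
    funext s
    simp only [Pi.add_apply]
    rw [← Finset.sum_add_distrib]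
    refine Finset.sum_congr rfl fun i _ => ?_
    simp only [map_add]
    ring
  map_smul' c ω := by
    funext s
    simp only [Pi.smul_apply, map_smul, RingHom.id_apply, Finset.smul_sum]
    refine Finset.sum_congr rfl fun i _ => ?_
    simp [mul_add, mul_smul_comm, smul_add, mul_assoc]

/-- The (untwisted) polynomial de Rham differential. -/
abbrev dRham (n : ℕ) (K : Type*) [CommRing K] : Form n K →ₗ[K] Form n K :=
  dTwist (fun _ => 0)

/-- Multiplication of a form by a 1-form `α`, `ω ↦ α ∧ ω`. -/
def wedge1 {n : ℕ} {K : Type*} [CommRing K]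
    (α : Fin n → MvPolynomial (Fin n) K) :
    Form n K →ₗ[K] Form n K where
  toFun ω := fun s => ∑ i ∈ s, sgn K s i * (α i * ω (s.erase i))
  map_add' ω₁ ω₂ := by
    funext s
    simp only [Pi.add_apply]
    rw [← Finset.sum_add_distrib]
    refine Finset.sum_congr rfl fun i _ => ?_
    ring
  map_smul' c ω := by
    funext s
    simp only [Pi.smul_apply, RingHom.id_apply, Finset.smul_sum]
    refine Finset.sum_congr rfl fun i _ => ?_
    simp [mul_smul_comm]

/-- Forms of pure degree `k`: those supported on index sets of cardinality `k`. -/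
def formDeg (n : ℕ) (K : Type*) [CommRing K] (k : ℕ) : Submodule K (Form n K) where
  carrier := {ω | ∀ s : Finset (Fin n), s.card ≠ k → ω s = 0}
  add_mem' := by
    intro a b ha hb s hs
    simp [Pi.add_apply, ha s hs, hb s hs]
  zero_mem' := fun s _ => rfl
  smul_mem' := by
    intro c a ha s hs
    simp [Pi.smul_apply, ha s hs]

/-- Degree-`k` cocycles of the twisted de Rham complex. -/
def cocycles {n : ℕ} {K : Type*} [CommRing K]
    (α : Fin n → MvPolynomial (Fin n) K) (k : ℕ) : Submodule K (Form n K) :=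
  formDeg n K k ⊓ LinearMap.ker (dTwist α)

/-- Degree-`k` coboundaries of the twisted de Rham complex. -/
def cobounds {n : ℕ} {K : Type*} [CommRing K]
    (α : Fin n → MvPolynomial (Fin n) K) (k : ℕ) : Submodule K (Form n K) :=
  Submodule.map (dTwist α) (formDeg n K (k - 1))

/-- The degree-`k` twisted de Rham cohomology of the 1-form `α`. -/
abbrev Htwist {n : ℕ} {K : Type*} [CommRing K]
    (α : Fin n → MvPolynomial (Fin n) K) (k : ℕ) :=
  (cocycles α k) ⧸ (Submodule.comap (cocycles α k).subtype (cobounds α k))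

/-- The differential `df` of a polynomial, as the family of coefficients of the
1-form `Σ_i (∂f/∂x_i) dx_i`. -/
def grad {n : ℕ} {K : Type*} [CommRing K] (f : MvPolynomial (Fin n) K) :
    Fin n → MvPolynomial (Fin n) K :=
  fun i => pderiv i f

/-- The twisted de Rham cohomology `H^k_f(K)` of a polynomial `f`. -/
abbrev Hf {n : ℕ} {K : Type*} [CommRing K] (f : MvPolynomial (Fin n) K) (k : ℕ) :=
  Htwist (grad f) k

/-- The top form `dx_1 ∧ ⋯ ∧ dx_n`. -/
def topForm (n : ℕ) (K : Type*) [CommRing K] : Form n K :=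
  fun s => if s = Finset.univ then 1 else 0


/-- The 1-form `df = Σ_{a,b} A_{ab} x_b dx_a` associated to the quadratic
function `f = ½xᵗAx`, given by its coefficient family `a ↦ Σ_b A_{ab} x_b`
(defined even when `2` is not invertible). -/
def quadDf {n : ℕ} {R : Type*} [CommRing R] (A : Matrix (Fin n) (Fin n) R) :
    Fin n → MvPolynomial (Fin n) R :=
  fun a => ∑ b, C (A a b) * X b

section CommutingOperators

variable {σ R M : Type*} [CommSemiring R] [AddCommMonoid M] [Module R M]

open scoped IsMulCommutative in
/-- The map `p ↦ p(D) v` given by substituting pairwise commuting endomorphisms `D i` for the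
variables of `p` and applying the result to `v`. -/
def evalCommuting (D : σ → Module.End R M) (hD : ∀ i j, Commute (D i) (D j)) (v : M) :
    MvPolynomial σ R →ₗ[R] M :=
  haveI : IsMulCommutative (Algebra.adjoin R (Set.range D)) :=
    Algebra.isMulCommutative_adjoin R <| by
      rintro _ ⟨i, rfl⟩ _ ⟨j, rfl⟩
      exact hD i j
  LinearMap.applyₗ v ∘ₗ (Algebra.adjoin R (Set.range D)).val.toLinearMap ∘ₗ
    (aeval fun i ↦ (⟨D i, Algebra.subset_adjoin ⟨i, rfl⟩⟩ :
      Algebra.adjoin R (Set.range D))).toLinearMap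

variable (D : σ → Module.End R M) (hD : ∀ i j, Commute (D i) (D j)) (v : M)

lemma evalCommuting_one : evalCommuting D hD v 1 = v := by
  simp [evalCommuting]

lemma evalCommuting_X_mul (i : σ) (p : MvPolynomial σ R) :
    evalCommuting D hD v (X i * p) = D i (evalCommuting D hD v p) := by
  simp [evalCommuting]

end CommutingOperators

section QuadraticConnection

variable {R : Type*} [CommRing R] {n : ℕ}

lemma pderiv_comm {σ S : Type*} [CommSemiring S] (i j : σ) (p : MvPolynomial σ S) :
    pderiv i (pderiv j p) = pderiv j (pderiv i p) := by
  classical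
  induction p using MvPolynomial.induction_on with
  | C a => simp only [pderiv_C, map_zero]
  | add p q hp hq => simp only [map_add, hp, hq]
  | mul_X p k hp =>
    simp only [pderiv_mul, map_add, pderiv_X, Pi.single_apply, apply_ite (pderiv _), pderiv_one,
      map_zero, hp, ite_self, mul_zero, add_zero]
    ring

lemma pderiv_quadDf (A : Matrix (Fin n) (Fin n) R) (i j : Fin n) :
    pderiv i (quadDf A j) = C (A j i) := by
  simp [quadDf, pderiv_X, Pi.single_apply, apply_ite]

lemma quadDf_one (i : Fin n) : quadDf (1 : Matrix (Fin n) (Fin n) R) i = X i := by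
  simp [quadDf, Matrix.one_apply, ite_mul, apply_ite]

lemma sum_smul_quadDf (A B : Matrix (Fin n) (Fin n) R) (i : Fin n) :
    ∑ j, A i j • quadDf B j = quadDf (A * B) i := by
  simp only [quadDf, Matrix.mul_apply, map_sum, map_mul, Finset.smul_sum, Finset.sum_mul,
    smul_eq_C_mul, mul_assoc]
  exact Finset.sum_comm

/-- The covariant derivative `c ∂_i + ∑_j A_ij x_j` along `x_i`. For `c = 1` these are the
components of the differential twisted by `quadDf A`; the value `c = -1` serves to invert
`quadTransform`. -/
def quadConn (A : Matrix (Fin n) (Fin n) R) (c : R) (i : Fin n) :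
    Module.End R (MvPolynomial (Fin n) R) :=
  c • (pderiv i).toLinearMap + LinearMap.mulLeft R (quadDf A i)

lemma quadConn_apply (A : Matrix (Fin n) (Fin n) R) (c : R) (i : Fin n)
    (p : MvPolynomial (Fin n) R) :
    quadConn A c i p = c • pderiv i p + quadDf A i * p := rfl

lemma pderiv_quadConn (A : Matrix (Fin n) (Fin n) R) (c : R) (i j : Fin n)
    (p : MvPolynomial (Fin n) R) :
    pderiv i (quadConn A c j p) = quadConn A c j (pderiv i p) + A j i • p := by
  simp only [quadConn_apply, map_add, smul_eq_C_mul, pderiv_C, pderiv_mul, pderiv_quadDf,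
    pderiv_comm i j]
  ring

lemma quadConn_commute {A : Matrix (Fin n) (Fin n) R} (hA : A.IsSymm) (c : R) (i j : Fin n) :
    Commute (quadConn A c i) (quadConn A c j) := by
  refine LinearMap.ext fun p ↦ ?_
  rw [Module.End.mul_apply, Module.End.mul_apply, quadConn_apply A c i, pderiv_quadConn]
  simp only [quadConn_apply, map_add, smul_eq_C_mul, pderiv_C, pderiv_mul, pderiv_quadDf,
    hA.apply i j]
  ring

variable {A B : Matrix (Fin n) (Fin n) R}

/-- The transformation `p ↦ p(∇) 1`, where `∇ = quadConn A c`. It exchanges multiplication by `x_i`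
with `∇_i`. -/
def quadTransform (hA : A.IsSymm) (c : R) : MvPolynomial (Fin n) R →ₗ[R] MvPolynomial (Fin n) R :=
  evalCommuting (quadConn A c) (quadConn_commute hA c) 1

lemma quadTransform_one (hA : A.IsSymm) (c : R) : quadTransform hA c 1 = 1 :=
  evalCommuting_one _ _ _

lemma quadTransform_X_mul (hA : A.IsSymm) (c : R) (i : Fin n) (p : MvPolynomial (Fin n) R) :
    quadTransform hA c (X i * p) = quadConn A c i (quadTransform hA c p) :=
  evalCommuting_X_mul _ _ _ _ _

lemma quadTransform_C (hA : A.IsSymm) (c a : R) : quadTransform hA c (C a) = C a := by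
  rw [← mul_one (C a), ← smul_eq_C_mul, map_smul, quadTransform_one]

lemma pderiv_quadTransform (hA : A.IsSymm) (c : R) (i : Fin n) (p : MvPolynomial (Fin n) R) :
    pderiv i (quadTransform hA c p) = ∑ k, A i k • quadTransform hA c (pderiv k p) := by
  induction p using MvPolynomial.induction_on with
  | C a => simp [quadTransform_C]
  | add p q hp hq => simp only [map_add, hp, hq, smul_add, Finset.sum_add_distrib]
  | mul_X p j hp =>
    rw [mul_comm, quadTransform_X_mul, pderiv_quadConn, hp]
    simp only [pderiv_mul, pderiv_X, Pi.single_apply, ite_mul, one_mul, zero_mul, map_add,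
      apply_ite (quadTransform hA c), map_zero, quadTransform_X_mul, smul_add, smul_ite, smul_zero,
      Finset.sum_add_distrib, Finset.sum_ite_eq, Finset.mem_univ, if_true, map_sum, map_smul,
      hA.apply i j, add_comm]

lemma sum_smul_pderiv_quadTransform (hA : A.IsSymm) (hBA : B * A = 1) (c : R) (i : Fin n)
    (p : MvPolynomial (Fin n) R) :
    ∑ j, B i j • pderiv j (quadTransform hA c p) = quadTransform hA c (pderiv i p) := by
  calc ∑ j, B i j • pderiv j (quadTransform hA c p)
      = ∑ k, (B * A) i k • quadTransform hA c (pderiv k p) := by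
        simp only [pderiv_quadTransform, Finset.smul_sum, smul_smul, Matrix.mul_apply,
          Finset.sum_smul]
        exact Finset.sum_comm
    _ = quadTransform hA c (pderiv i p) := by simp [hBA, Matrix.one_apply]

lemma quadTransform_quadDf_mul (hB : B.IsSymm) (hAB : A * B = 1) (c : R) (i : Fin n)
    (p : MvPolynomial (Fin n) R) :
    quadTransform hB c (quadDf A i * p) =
      c • quadTransform hB c (pderiv i p) + X i * quadTransform hB c p := by
  calc quadTransform hB c (quadDf A i * p)
      = ∑ j, A i j • quadConn B c j (quadTransform hB c p) := by
        simp only [quadDf, Finset.sum_mul, map_sum, ← smul_eq_C_mul, smul_mul_assoc, map_smul,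
          quadTransform_X_mul]
    _ = c • ∑ j, A i j • pderiv j (quadTransform hB c p) +
          (∑ j, A i j • quadDf B j) * quadTransform hB c p := by
        simp only [quadConn_apply, smul_add, Finset.sum_add_distrib, Finset.smul_sum,
          Finset.sum_mul, smul_mul_assoc, smul_comm c]
    _ = c • quadTransform hB c (pderiv i p) + X i * quadTransform hB c p := by
        rw [sum_smul_pderiv_quadTransform hB hAB, sum_smul_quadDf, hAB, quadDf_one]

lemma quadTransform_neg_comp (hA : A.IsSymm) (hB : B.IsSymm) (hAB : A * B = 1) (c : R) :
    quadTransform hB (-c) ∘ₗ quadTransform hA c = LinearMap.id := by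
  refine LinearMap.ext fun p ↦ ?_
  induction p using MvPolynomial.induction_on with
  | C a => simp [quadTransform_C]
  | add p q hp hq => rw [map_add, hp, hq, map_add]
  | mul_X p i hp =>
    rw [LinearMap.comp_apply, LinearMap.id_apply] at hp ⊢
    rw [mul_comm, quadTransform_X_mul, quadConn_apply, map_add, map_smul,
      quadTransform_quadDf_mul hB hAB, hp, neg_smul, add_neg_cancel_left]

end QuadraticConnection

section Koszul

section CoordinateDivision

variable {σ R : Type*} [CommSemiring R]

/-- Division by `x_i`, discarding the monomials that do not contain `x_i`. -/
def divX (i : σ) : MvPolynomial σ R →ₗ[R] MvPolynomial σ R where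
  toFun p := p.divMonomial (Finsupp.single i 1)
  map_add' p q := add_divMonomial p q _
  map_smul' c p := by ext m; simp [coeff_divMonomial]

lemma divX_X_mul (i : σ) (p : MvPolynomial σ R) : divX i (X i * p) = p :=
  X_mul_divMonomial i p

lemma divX_X_mul_of_ne {i j : σ} (hji : j ≠ i) (p : MvPolynomial σ R) :
    divX i (X j * p) = X j * divX i p := by
  classical
  ext m
  have hsupp : j ∈ (Finsupp.single i 1 + m).support ↔ j ∈ m.support := by simp [hji.symm]
  simp only [divX, LinearMap.coe_mk, AddHom.coe_mk, coeff_divMonomial, coeff_X_mul', hsupp]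
  split_ifs with hj
  · have hle : Finsupp.single j 1 ≤ m :=
      Finsupp.single_le_iff.2 (Nat.one_le_iff_ne_zero.2 (Finsupp.mem_support_iff.1 hj))
    rw [add_tsub_assoc_of_le hle]
  · rfl

lemma divX_C (i : σ) (a : R) : divX i (C a) = 0 := by
  classical
  ext m
  have hne : Finsupp.single i 1 + m ≠ 0 := by simp
  simp [divX, coeff_divMonomial, coeff_C, hne.symm]

variable [DecidableEq σ]

/-- Restriction of a polynomial to the coordinate subspace `x_i = 0`, `i ∈ T`. -/
def restrictZero (T : Finset σ) : MvPolynomial σ R →ₐ[R] MvPolynomial σ R :=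
  aeval fun j ↦ if j ∈ T then 0 else X j

lemma restrictZero_X (T : Finset σ) (j : σ) :
    restrictZero T (X j : MvPolynomial σ R) = if j ∈ T then 0 else X j :=
  aeval_X _ _

lemma restrictZero_insert (i : σ) (T : Finset σ) (p : MvPolynomial σ R) :
    restrictZero (insert i T) p = restrictZero {i} (restrictZero T p) := by
  suffices h : restrictZero (R := R) (insert i T) = (restrictZero {i}).comp (restrictZero T) from
    DFunLike.congr_fun h p
  refine algHom_ext fun j ↦ ?_
  by_cases hj : j ∈ T <;> simp [restrictZero_X, hj]

lemma restrictZero_empty (p : MvPolynomial σ R) : restrictZero ∅ p = p := by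
  simp [restrictZero]

lemma restrictZero_univ [Fintype σ] (p : MvPolynomial σ R) :
    restrictZero Finset.univ p = C (constantCoeff p) := by
  simpa [restrictZero] using aeval_zero' (S₁ := MvPolynomial σ R) p

lemma restrictZero_singleton_add_X_mul_divX (i : σ) (p : MvPolynomial σ R) :
    restrictZero {i} p + X i * divX i p = p := by
  induction p using MvPolynomial.induction_on with
  | C a => simp [divX_C, restrictZero]
  | add p q hp hq =>
    rw [map_add, map_add, mul_add, add_add_add_comm, hp, hq]
  | mul_X p j hp =>
    rw [mul_comm p, map_mul, restrictZero_X]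
    obtain rfl | hji := eq_or_ne j i
    · simp [divX_X_mul]
    · rw [if_neg (by simpa using hji), divX_X_mul_of_ne hji, mul_left_comm, ← mul_add, hp]

end CoordinateDivision

variable {R : Type*} [CommRing R] {n : ℕ}

lemma sgn_mul_self (s : Finset (Fin n)) (i : Fin n) : sgn R s i * sgn R s i = 1 := by
  rw [sgn, ← mul_pow, neg_one_mul, neg_neg, one_pow]

lemma map_sgn_mul (f : MvPolynomial (Fin n) R →ₗ[R] MvPolynomial (Fin n) R) (s : Finset (Fin n))
    (i : Fin n) (p : MvPolynomial (Fin n) R) :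
    f (sgn R s i * p) = sgn R s i * f p := by
  rcases neg_one_pow_eq_or (MvPolynomial (Fin n) R) (s.filter (· < i)).card with h | h <;>
    simp [sgn, h]

lemma sgn_insert {s : Finset (Fin n)} {i : Fin n} (hi : i ∉ s) (j : Fin n) :
    sgn R (insert i s) j = sgn R s j * if i < j then -1 else 1 := by
  rw [sgn, sgn, Finset.filter_insert]
  split_ifs
  · rw [Finset.card_insert_of_notMem (by simp [hi]), pow_succ]
  · rw [mul_one]

lemma sgn_mul_sgn_insert_erase {s : Finset (Fin n)} {i j : Fin n} (hi : i ∉ s) (hj : j ∈ s) :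
    sgn R s j * sgn R (insert i (s.erase j)) i =
      -(sgn R (insert i s) i * sgn R (insert i s) j) := by
  have sgn_eq : sgn R s i = sgn R (s.erase j) i * if j < i then -1 else 1 := by
    rw [← sgn_insert (s.notMem_erase j), Finset.insert_erase hj]
  rw [sgn_insert hi, sgn_insert hi, sgn_insert (by simp [hi]), sgn_eq]
  rcases lt_or_gt_of_ne (ne_of_mem_of_not_mem hj hi) with h | h <;> simp [h, h.not_gt, mul_comm]

lemma wedge1_apply (α : Fin n → MvPolynomial (Fin n) R) (ω : Form n R) (s : Finset (Fin n)) :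
    wedge1 α ω s = ∑ i ∈ s, sgn R s i * (α i * ω (s.erase i)) := rfl

/-- Contraction with `∂/∂x_i` followed by division of the coefficients by `x_i`; this is a homotopy
of the Koszul complex `(Form n R, wedge1 X)`. -/
def koszulHomotopy (i : Fin n) : Form n R →ₗ[R] Form n R where
  toFun ω s := if i ∈ s then 0 else sgn R (insert i s) i * divX i (ω (insert i s))
  map_add' ω η := by
    funext s
    by_cases hi : i ∈ s <;> simp [hi, mul_add]
  map_smul' c ω := by
    funext s
    by_cases hi : i ∈ s <;> simp [hi]

lemma koszulHomotopy_apply (i : Fin n) (ω : Form n R) (s : Finset (Fin n)) :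
    koszulHomotopy i ω s =
      if i ∈ s then 0 else sgn R (insert i s) i * divX i (ω (insert i s)) := rfl

/-- The projection of the Koszul complex onto the forms `ω ∧ ⋀_{i ∈ T} dx_i` whose coefficients do
not involve the variables `x_i`, `i ∈ T`. -/
def koszulProj (T : Finset (Fin n)) : Form n R →ₗ[R] Form n R where
  toFun ω s := if T ⊆ s then restrictZero T (ω s) else 0
  map_add' ω η := by
    funext s
    by_cases hT : T ⊆ s <;> simp [hT]
  map_smul' c ω := by
    funext s
    by_cases hT : T ⊆ s <;> simp [hT]

lemma koszulProj_apply (T : Finset (Fin n)) (ω : Form n R) (s : Finset (Fin n)) :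
    koszulProj T ω s = if T ⊆ s then restrictZero T (ω s) else 0 := rfl

lemma koszulProj_mem_formDeg (T : Finset (Fin n)) {k : ℕ} {ω : Form n R}
    (hω : ω ∈ formDeg n R k) : koszulProj T ω ∈ formDeg n R k := by
  intro s hs
  rw [koszulProj_apply, hω s hs, map_zero, ite_self]

lemma koszulProj_empty (ω : Form n R) : koszulProj ∅ ω = ω := by
  funext s
  simp [koszulProj_apply, restrictZero_empty]

lemma koszulProj_insert (i : Fin n) (T : Finset (Fin n)) (ω : Form n R) :
    koszulProj (insert i T) ω = koszulProj {i} (koszulProj T ω) := by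
  funext s
  by_cases hi : i ∈ s <;> by_cases hT : T ⊆ s <;>
    simp [koszulProj_apply, Finset.insert_subset_iff, restrictZero_insert, hi, hT]

lemma koszulProj_univ (ω : Form n R) :
    koszulProj Finset.univ ω = constantCoeff (ω Finset.univ) • topForm n R := by
  funext s
  by_cases hs : s = Finset.univ
  · subst hs
    simp [koszulProj_apply, restrictZero_univ, topForm, smul_eq_C_mul]
  · simp [koszulProj_apply, Finset.univ_subset_iff, topForm, hs]

lemma wedge1_X_koszulProj (T : Finset (Fin n)) (ω : Form n R) :
    wedge1 X (koszulProj T ω) = koszulProj T (wedge1 X ω) := by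
  funext s
  rw [koszulProj_apply, wedge1_apply]
  split_ifs with hT
  · rw [wedge1_apply, map_sum]
    refine Finset.sum_congr rfl fun j _ ↦ ?_
    have map_sgn : restrictZero T (sgn R s j) = sgn R s j := by simp [sgn]
    rw [map_mul, map_mul, map_sgn, restrictZero_X, koszulProj_apply]
    by_cases hj : j ∈ T <;> simp [hj, Finset.subset_erase, hT]
  · refine Finset.sum_eq_zero fun j _ ↦ ?_
    rw [koszulProj_apply, if_neg fun h ↦ hT (h.trans (s.erase_subset j)), mul_zero, mul_zero]

lemma koszulProj_add_wedge1_koszulHomotopy_add (i : Fin n) (ω : Form n R) :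
    koszulProj {i} ω + wedge1 X (koszulHomotopy i ω) + koszulHomotopy i (wedge1 X ω) = ω := by
  funext s
  simp only [Pi.add_apply, koszulProj_apply, wedge1_apply, Finset.singleton_subset_iff]
  by_cases hi : i ∈ s
  · have sum_eq : ∑ j ∈ s, sgn R s j * (X j * koszulHomotopy i ω (s.erase j)) =
        X i * divX i (ω s) := by
      rw [Finset.sum_eq_single_of_mem i hi fun j _ hji ↦ by
        simp [koszulHomotopy_apply, hi, hji.symm]]
      rw [koszulHomotopy_apply, if_neg (s.notMem_erase i), Finset.insert_erase hi, mul_left_comm,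
        ← mul_assoc (sgn R s i), sgn_mul_self, one_mul]
    rw [if_pos hi, sum_eq, koszulHomotopy_apply, if_pos hi, add_zero,
      restrictZero_singleton_add_X_mul_divX]
  · have cross_terms (j) (hj : j ∈ s) : sgn R s j * (X j * koszulHomotopy i ω (s.erase j)) =
        -(sgn R (insert i s) i * (sgn R (insert i s) j *
          divX i (X j * ω ((insert i s).erase j)))) := by
      have hji : j ≠ i := ne_of_mem_of_not_mem hj hi
      rw [koszulHomotopy_apply, if_neg (by simp [hi]), divX_X_mul_of_ne hji,
        Finset.erase_insert_of_ne hji.symm]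
      linear_combination
        (X j * divX i (ω (insert i (s.erase j)))) * sgn_mul_sgn_insert_erase (R := R) hi hj
    rw [if_neg hi, zero_add, Finset.sum_congr rfl cross_terms, koszulHomotopy_apply, if_neg hi,
      wedge1_apply, Finset.sum_insert hi, Finset.erase_insert hi, map_add, map_sum]
    simp only [map_sgn_mul, divX_X_mul, mul_add, Finset.mul_sum, Finset.sum_neg_distrib]
    linear_combination ω s * sgn_mul_self (R := R) (insert i s) i

lemma koszulHomotopy_mem_formDeg (i : Fin n) {k : ℕ} {ω : Form n R} (hω : ω ∈ formDeg n R k) :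
    koszulHomotopy i ω ∈ formDeg n R (k - 1) := by
  intro s hs
  rw [koszulHomotopy_apply]
  split_ifs with hi
  · rfl
  · rw [hω _ (by rw [Finset.card_insert_of_notMem hi]; omega), map_zero, mul_zero]

/-- Composing the projections `koszulProj {i}` for `i ∈ T` composes the homotopies. -/
lemma exists_koszul_homotopy (T : Finset (Fin n)) :
    ∃ H : Form n R →ₗ[R] Form n R,
      (∀ k, ∀ ω ∈ formDeg n R k, H ω ∈ formDeg n R (k - 1)) ∧
      ∀ ω, koszulProj T ω + wedge1 X (H ω) + H (wedge1 X ω) = ω := by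
  induction T using Finset.induction_on with
  | empty => exact ⟨0, fun k ω _ ↦ zero_mem _, fun ω ↦ by simp [koszulProj_empty]⟩
  | insert i T _ ih =>
    obtain ⟨H, hdeg, hH⟩ := ih
    refine ⟨H + koszulHomotopy i ∘ₗ koszulProj T, fun k ω hω ↦ ?_, fun ω ↦ ?_⟩
    · exact add_mem (hdeg k ω hω) (koszulHomotopy_mem_formDeg i (koszulProj_mem_formDeg T hω))
    · have hi := koszulProj_add_wedge1_koszulHomotopy_add i (koszulProj T ω)
      rw [wedge1_X_koszulProj, ← koszulProj_insert] at hi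
      simp only [LinearMap.add_apply, LinearMap.comp_apply, map_add]
      linear_combination hi + hH ω

lemma exists_eq_constantCoeff_smul_topForm_add_wedge1 {k : ℕ} {ω : Form n R}
    (hω : ω ∈ formDeg n R k) (hd : wedge1 X ω = 0) :
    ∃ η ∈ formDeg n R (k - 1),
      ω = constantCoeff (ω Finset.univ) • topForm n R + wedge1 X η := by
  obtain ⟨H, hdeg, hH⟩ := exists_koszul_homotopy (R := R) (Finset.univ : Finset (Fin n))
  refine ⟨H ω, hdeg k ω hω, ?_⟩
  simpa [koszulProj_univ, hd] using (hH ω).symm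

lemma constantCoeff_wedge1_X (η : Form n R) (s : Finset (Fin n)) :
    constantCoeff (wedge1 X η s) = 0 := by
  simp [wedge1_apply]

end Koszul

section TwistedComplex

variable {R : Type*} [CommRing R] {n : ℕ}

lemma dTwist_apply (α : Fin n → MvPolynomial (Fin n) R) (ω : Form n R) (s : Finset (Fin n)) :
    dTwist α ω s =
      ∑ i ∈ s, sgn R s i * (pderiv i (ω (s.erase i)) + α i * ω (s.erase i)) := rfl

lemma topForm_mem_formDeg : topForm n R ∈ formDeg n R n :=
  fun _ hs ↦ if_neg fun h ↦ hs (by simp [h])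

lemma topForm_mem_cocycles (α : Fin n → MvPolynomial (Fin n) R) :
    topForm n R ∈ cocycles α n := by
  refine ⟨topForm_mem_formDeg, LinearMap.mem_ker.2 <| funext fun s ↦ ?_⟩
  rw [dTwist_apply]
  refine Finset.sum_eq_zero fun i _ ↦ ?_
  have erase_ne : s.erase i ≠ Finset.univ := fun h ↦ by simpa [h] using s.notMem_erase i
  simp [topForm, erase_ne]

/-- A linear automorphism of the polynomial ring fixing `1` and carrying multiplication by `x_i` to
the covariant derivative `∂_i + α_i`. Applied to coefficients, it identifies the Koszul complex of
`x_1, …, x_n` with the complex twisted by `α`. -/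
structure KoszulTrivialization (α : Fin n → MvPolynomial (Fin n) R) extends
    MvPolynomial (Fin n) R ≃ₗ[R] MvPolynomial (Fin n) R where
  map_one' : toLinearEquiv 1 = 1
  map_X_mul' (i : Fin n) (p : MvPolynomial (Fin n) R) :
    toLinearEquiv (X i * p) = pderiv i (toLinearEquiv p) + α i * toLinearEquiv p

namespace KoszulTrivialization

variable {α : Fin n → MvPolynomial (Fin n) R} (Θ : KoszulTrivialization α)

/-- The action of the trivialization on coefficients, an isomorphism from the Koszul complex to the
twisted de Rham complex. -/
def formEquiv : Form n R ≃ₗ[R] Form n R :=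
  LinearEquiv.piCongrRight fun _ ↦ Θ.toLinearEquiv

lemma formEquiv_apply (ω : Form n R) (s : Finset (Fin n)) :
    Θ.formEquiv ω s = Θ.toLinearEquiv (ω s) := rfl

lemma formEquiv_symm_apply (ω : Form n R) (s : Finset (Fin n)) :
    Θ.formEquiv.symm ω s = Θ.toLinearEquiv.symm (ω s) := rfl

lemma dTwist_formEquiv (ω : Form n R) :
    dTwist α (Θ.formEquiv ω) = Θ.formEquiv (wedge1 X ω) := by
  funext s
  simp only [dTwist_apply, formEquiv_apply, wedge1_apply, map_sum, ← Θ.map_X_mul']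
  exact Finset.sum_congr rfl fun i _ ↦ (map_sgn_mul Θ.toLinearMap s i _).symm

lemma wedge1_X_formEquiv_symm (ω : Form n R) :
    wedge1 X (Θ.formEquiv.symm ω) = Θ.formEquiv.symm (dTwist α ω) := by
  rw [LinearEquiv.eq_symm_apply, ← dTwist_formEquiv, LinearEquiv.apply_symm_apply]

lemma formEquiv_topForm : Θ.formEquiv (topForm n R) = topForm n R := by
  funext s
  by_cases hs : s = Finset.univ <;> simp [formEquiv_apply, topForm, hs, Θ.map_one']

lemma formEquiv_mem_formDeg {k : ℕ} {ω : Form n R} (hω : ω ∈ formDeg n R k) :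
    Θ.formEquiv ω ∈ formDeg n R k :=
  fun s hs ↦ by rw [formEquiv_apply, hω s hs, map_zero]

lemma formEquiv_symm_mem_formDeg {k : ℕ} {ω : Form n R} (hω : ω ∈ formDeg n R k) :
    Θ.formEquiv.symm ω ∈ formDeg n R k :=
  fun s hs ↦ by rw [formEquiv_symm_apply, hω s hs, map_zero]

/-- The functional identifying the cohomology in degree `n` with `R`: the constant term of the
coefficient of `dx_1 ∧ ⋯ ∧ dx_n`, read in the Koszul complex. -/
def topCoeff : Form n R →ₗ[R] R :=
  lcoeff R 0 ∘ₗ LinearMap.proj Finset.univ ∘ₗ Θ.formEquiv.symm.toLinearMap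

lemma topCoeff_apply (ω : Form n R) :
    Θ.topCoeff ω = constantCoeff (Θ.formEquiv.symm ω Finset.univ) := rfl

lemma topCoeff_topForm : Θ.topCoeff (topForm n R) = 1 := by
  rw [topCoeff_apply, ← Θ.formEquiv_topForm, LinearEquiv.symm_apply_apply]
  simp [topForm]

lemma topCoeff_dTwist (η : Form n R) : Θ.topCoeff (dTwist α η) = 0 := by
  rw [topCoeff_apply, ← wedge1_X_formEquiv_symm, constantCoeff_wedge1_X]

lemma topCoeff_eq_zero {k : ℕ} (hk : k ≠ n) {ω : Form n R} (hω : ω ∈ formDeg n R k) :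
    Θ.topCoeff ω = 0 := by
  have huniv : (Finset.univ : Finset (Fin n)).card ≠ k := by simpa using hk.symm
  rw [topCoeff_apply, formEquiv_symm_apply, hω _ huniv, map_zero, map_zero]

lemma exists_eq_topCoeff_smul_topForm_add_dTwist {k : ℕ} {ω : Form n R}
    (hω : ω ∈ cocycles α k) :
    ∃ η ∈ formDeg n R (k - 1), ω = Θ.topCoeff ω • topForm n R + dTwist α η := by
  obtain ⟨hdeg, hd⟩ := hω
  have hclosed : wedge1 X (Θ.formEquiv.symm ω) = 0 := by
    rw [wedge1_X_formEquiv_symm, LinearMap.mem_ker.1 hd, map_zero]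
  obtain ⟨η, hη, hωη⟩ :=
    exists_eq_constantCoeff_smul_topForm_add_wedge1 (Θ.formEquiv_symm_mem_formDeg hdeg) hclosed
  refine ⟨Θ.formEquiv η, Θ.formEquiv_mem_formDeg hη, ?_⟩
  rw [dTwist_formEquiv, topCoeff_apply, ← Θ.formEquiv_topForm, ← map_smul, ← map_add,
    ← LinearEquiv.symm_apply_eq]
  simpa [formEquiv_topForm] using hωη

lemma mem_cobounds_iff {k : ℕ} {ω : Form n R} (hω : ω ∈ cocycles α k) :
    ω ∈ cobounds α k ↔ Θ.topCoeff ω = 0 := by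
  constructor
  · rintro ⟨η, -, rfl⟩
    exact Θ.topCoeff_dTwist η
  · intro hzero
    obtain ⟨η, hη, hωη⟩ := Θ.exists_eq_topCoeff_smul_topForm_add_dTwist hω
    rw [hzero, zero_smul, zero_add] at hωη
    exact ⟨η, hη, hωη.symm⟩

lemma subsingleton_htwist (Θ : KoszulTrivialization α) {k : ℕ} (hk : k ≠ n) :
    Subsingleton (Htwist α k) := by
  rw [Submodule.Quotient.subsingleton_iff, eq_top_iff]
  rintro ⟨ω, hω⟩ -
  exact (Θ.mem_cobounds_iff hω).2 (Θ.topCoeff_eq_zero hk hω.1)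

lemma comap_cobounds_eq_ker (k : ℕ) :
    (cobounds α k).comap (cocycles α k).subtype =
      LinearMap.ker (Θ.topCoeff ∘ₗ (cocycles α k).subtype) :=
  Submodule.ext fun ω ↦ Θ.mem_cobounds_iff ω.2

lemma topCoeff_surjective : Function.Surjective (Θ.topCoeff ∘ₗ (cocycles α n).subtype) :=
  fun r ↦ ⟨r • ⟨topForm n R, topForm_mem_cocycles α⟩, by simp [topCoeff_topForm]⟩

/-- The isomorphism `H^n ≅ R` induced by `topCoeff`. -/
def htwistEquiv : Htwist α n ≃ₗ[R] R :=
  Submodule.quotEquivOfEq _ _ (Θ.comap_cobounds_eq_ker n) ≪≫ₗ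
    LinearMap.quotKerEquivOfSurjective _ Θ.topCoeff_surjective

lemma htwistEquiv_mk_topForm :
    Θ.htwistEquiv (Submodule.Quotient.mk ⟨topForm n R, topForm_mem_cocycles α⟩) = 1 :=
  Θ.topCoeff_topForm

lemma eq_htwistEquiv_smul_mk_topForm (y : Htwist α n) :
    y = Θ.htwistEquiv y •
      Submodule.Quotient.mk (⟨topForm n R, topForm_mem_cocycles α⟩ : cocycles α n) := by
  apply Θ.htwistEquiv.injective
  rw [map_smul, htwistEquiv_mk_topForm, smul_eq_mul, mul_one]

end KoszulTrivialization

/-- `quadTransform` as a trivialization of the complex twisted by `quadDf A`. -/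
def quadTrivialization {A B : Matrix (Fin n) (Fin n) R} (hA : A.IsSymm) (hAB : A * B = 1) :
    KoszulTrivialization (quadDf A) :=
  have hB : B.IsSymm := Matrix.inv_eq_right_inv hAB ▸ hA.inv
  have hBA : B * A = 1 := mul_eq_one_comm.1 hAB
  { toLinearEquiv := LinearEquiv.ofLinearMap (quadTransform hA 1) (quadTransform hB (-1))
      (by simpa using quadTransform_neg_comp hB hA hBA (-1))
      (quadTransform_neg_comp hA hB hAB 1)
    map_one' := quadTransform_one hA 1
    map_X_mul' i p := by
      simpa [quadConn_apply] using quadTransform_X_mul hA 1 i p }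

end TwistedComplex

/-- For an invertible symmetric matrix `A` over a commutative
ring `R` and `f = ½xᵗAx`, the twisted de Rham cohomology `H^k_f(R)` is
concentrated in degree `n`: it vanishes for `k ≠ n`, and in degree `n` it is
isomorphic to `R`, generated by the class of `dx_1 ∧ ⋯ ∧ dx_n`. -/
theorem quadratic_twisted_deRham_cohomology {R : Type*} [CommRing R] {n : ℕ}
    (hn : 0 < n) (A B : Matrix (Fin n) (Fin n) R) (hsymm : A.IsSymm)
    (hAB : A * B = 1) (hBA : B * A = 1) :
    ∃ h : topForm n R ∈ cocycles (quadDf A) n,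
      (∀ k : ℕ, k ≠ n → Subsingleton (Htwist (quadDf A) k)) ∧
      Nonempty (Htwist (quadDf A) n ≃ₗ[R] R) ∧
      (∀ y : Htwist (quadDf A) n, ∃ r : R,
        y = r • Submodule.Quotient.mk
          (⟨topForm n R, h⟩ : cocycles (quadDf A) n)) := by
  let Θ := quadTrivialization hsymm hAB
  exact ⟨topForm_mem_cocycles (quadDf A), fun _ hk ↦ Θ.subsingleton_htwist hk, ⟨Θ.htwistEquiv⟩,
    fun y ↦ ⟨Θ.htwistEquiv y, Θ.eq_htwistEquiv_smul_mk_topForm y⟩⟩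

end
end

section
/- Let A be a real symmetric negative definite n×n matrix and let f(x) = ½xᵗAx. Then for every polynomial h ∈ ℝ[x_1,…,x_n] and every index a ∈ {1,…,n}, the function (∂h/∂x_a + (Σ_b A_{ab}x_b)·h)·e^{f(x)} is integrable on ℝⁿ and ∫_{ℝⁿ} (∂h/∂x_a(x) + (Σ_b A_{ab}x_b)·h(x))·e^{½xᵗAx} dx = 0. In other words, the linear functional I(g) = ∫_{ℝⁿ} g(x)e^{f(x)}dx on polynomials vanishes on every element of the form ∂_a h + (∂_a f)·h. -/
open MvPolynomial MeasureTheory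

noncomputable section

/-- The quadratic function `f(x) = ½xᵗAx` on `ℝⁿ`. -/
def quadFun {n : ℕ} (A : Matrix (Fin n) (Fin n) ℝ) (x : Fin n → ℝ) : ℝ :=
  (∑ i, ∑ j, A i j * x i * x j) / 2

/-!
The integrand is the partial derivative `∂_a (h e^f)`. Both `h e^f` and this derivative have the
form polynomial times `e^f`, and they are integrable because negative definiteness bounds `f`
above by `-c ∑ x_i²` for some `c > 0`. The integral of a directional derivative vanishes as soon as
the function and its derivative are integrable.
-/

theorem integral_eq_zero_of_hasLineDerivAt {E F : Type*} [NormedAddCommGroup E] [NormedSpace ℝ E]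
    [FiniteDimensional ℝ E] [MeasurableSpace E] [BorelSpace E] {μ : Measure E}
    [μ.IsAddHaarMeasure] [NormedAddCommGroup F] [NormedSpace ℝ F] {g g' : E → F} {v : E}
    (hg : Integrable g μ) (hg' : Integrable g' μ) (hderiv : ∀ x, HasLineDerivAt ℝ g (g' x) x v) :
    ∫ x, g' x ∂μ = 0 := by
  have hparts := integral_bilinear_hasLineDerivAt_right_eq_neg_left_of_integrable
    (μ := μ) (f := fun _ ↦ (1 : ℝ)) (f' := fun _ ↦ 0) (v := v)
    (B := ContinuousLinearMap.lsmul ℝ ℝ) (by simp) (by simpa using hg') (by simpa using hg)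
    (fun x _ ↦ (hasFDerivAt_const 1 x).hasLineDerivAt v) (fun x _ ↦ hderiv x)
  simpa using hparts

section LineDeriv

variable {σ : Type*} [DecidableEq σ]

theorem hasLineDerivAt_eval {𝕜 : Type*} [NontriviallyNormedField 𝕜] (p : MvPolynomial σ 𝕜)
    (a : σ) (x : σ → 𝕜) :
    HasLineDerivAt 𝕜 (fun y ↦ eval y p) (eval x (pderiv a p)) x (Pi.single a 1) := by
  induction p using MvPolynomial.induction_on with
  | C r => simpa [HasLineDerivAt] using hasDerivAt_const (0 : 𝕜) r
  | add p q hp hq => simpa [HasLineDerivAt] using! HasDerivAt.add hp hq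
  | mul_X p i hp =>
    have hcoord : HasDerivAt (fun t : 𝕜 ↦ (x + t • (Pi.single a 1 : σ → 𝕜)) i)
        ((Pi.single a 1 : σ → 𝕜) i) 0 := by
      simpa using ((hasDerivAt_id (0 : 𝕜)).mul_const ((Pi.single a 1 : σ → 𝕜) i)).const_add (x i)
    have hleibniz : eval x (pderiv a (p * X i)) =
        eval x (pderiv a p) * x i + eval x p * (Pi.single a 1 : σ → 𝕜) i := by
      rcases eq_or_ne i a with rfl | hia
      · simp [add_comm, mul_comm]
      · simp [pderiv_X_of_ne hia, hia, mul_comm]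
    simpa only [HasLineDerivAt, hleibniz, map_mul, eval_X, zero_smul, add_zero] using!
      HasDerivAt.mul hp hcoord

theorem hasLineDerivAt_eval_mul_exp_eval (h q : MvPolynomial σ ℝ) (a : σ) (x : σ → ℝ) :
    HasLineDerivAt ℝ (fun y ↦ eval y h * Real.exp (eval y q))
      (eval x (pderiv a h + pderiv a q * h) * Real.exp (eval x q)) x (Pi.single a 1) := by
  have hleibniz := HasDerivAt.mul (hasLineDerivAt_eval h a x)
    (HasDerivAt.exp (hasLineDerivAt_eval q a x))
  simp only [zero_smul, add_zero] at hleibniz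
  refine HasDerivAt.congr_deriv hleibniz ?_
  simp only [map_add, map_mul]
  ring

end LineDeriv

section Integrability

variable {ι : Type*} [Fintype ι]

theorem integrable_eval_mul_prod {𝕜 : Type*} [NormedCommRing 𝕜] [MeasurableSpace 𝕜]
    {μ : ι → Measure 𝕜} [∀ i, SigmaFinite (μ i)] {w : ι → 𝕜 → 𝕜}
    (hw : ∀ i (k : ℕ), Integrable (fun t ↦ t ^ k * w i t) (μ i)) (p : MvPolynomial ι 𝕜) :
    Integrable (fun x ↦ eval x p * ∏ i, w i (x i)) (Measure.pi μ) := by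
  induction p using MvPolynomial.induction_on' with
  | monomial u r =>
    have hmonomial := (Integrable.fintype_prod fun i ↦ hw i (u i)).const_mul r
    simpa [eval_monomial, Finsupp.prod_fintype, Finset.prod_mul_distrib, mul_assoc]
      using hmonomial
  | add p q hp hq => simpa only [map_add, add_mul] using! hp.add hq

theorem integrable_eval_mul_exp_neg_mul_sum_sq {c : ℝ} (hc : 0 < c) (p : MvPolynomial ι ℝ) :
    Integrable fun x : ι → ℝ ↦ eval x p * Real.exp (-c * ∑ i, x i ^ 2) := by
  have hmoment (k : ℕ) : Integrable fun t : ℝ ↦ t ^ k * Real.exp (-c * t ^ 2) := by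
    simpa using integrable_rpow_mul_exp_neg_mul_sq hc (s := k)
      (neg_one_lt_zero.trans_le k.cast_nonneg)
  simpa only [Finset.mul_sum, Real.exp_sum, volume_pi] using
    integrable_eval_mul_prod (fun _ : ι ↦ hmoment) p

theorem integrable_eval_mul_exp_of_le_sub_mul_sum_sq {f : (ι → ℝ) → ℝ}
    (hf : AEStronglyMeasurable f) {b c : ℝ} (hc : 0 < c)
    (hle : ∀ x, f x ≤ b - c * ∑ i, x i ^ 2) (p : MvPolynomial ι ℝ) :
    Integrable fun x ↦ eval x p * Real.exp (f x) := by
  refine ((integrable_eval_mul_exp_neg_mul_sum_sq hc p).const_mul (Real.exp b)).mono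
    ((continuous_eval p).aestronglyMeasurable.mul
      (Real.continuous_exp.comp_aestronglyMeasurable hf)) (.of_forall fun x ↦ ?_)
  calc ‖eval x p * Real.exp (f x)‖
      = ‖eval x p‖ * Real.exp (f x) := by rw [norm_mul, Real.norm_of_nonneg (Real.exp_nonneg _)]
    _ ≤ ‖eval x p‖ * Real.exp (b - c * ∑ i, x i ^ 2) := by gcongr; exact hle x
    _ = ‖Real.exp b * (eval x p * Real.exp (-c * ∑ i, x i ^ 2))‖ := by
      simp only [norm_mul, Real.norm_of_nonneg (Real.exp_nonneg _), sub_eq_add_neg, ← neg_mul,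
        Real.exp_add]
      ring

end Integrability

section Quadratic

variable {ι : Type*} [Fintype ι]

open scoped ComplexOrder MatrixOrder in
theorem exists_pos_algebraMap_le_of_posDef {𝕜 : Type*} [RCLike 𝕜] [DecidableEq ι]
    {A : Matrix ι ι 𝕜} (hA : A.PosDef) :
    ∃ c : ℝ, 0 < c ∧ algebraMap ℝ (Matrix ι ι 𝕜) c ≤ A := by
  cases isEmpty_or_nonempty ι
  · exact ⟨1, one_pos, (Subsingleton.elim _ _).le⟩
  · exact (CFC.exists_pos_algebraMap_le_iff hA.isHermitian).2 fun _ ↦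
      hA.isStrictlyPositive.spectrum_pos

open scoped MatrixOrder in
theorem exists_pos_forall_mul_sum_sq_le_of_posDef {A : Matrix ι ι ℝ} (hA : A.PosDef) :
    ∃ c : ℝ, 0 < c ∧ ∀ x, c * ∑ i, x i ^ 2 ≤ x ⬝ᵥ A.mulVec x := by
  classical
  obtain ⟨c, hc, hle⟩ := exists_pos_algebraMap_le_of_posDef hA
  refine ⟨c, hc, fun x ↦ ?_⟩
  have hnonneg := (Matrix.le_iff.1 hle).dotProduct_mulVec_nonneg x
  rw [Matrix.sub_mulVec, dotProduct_sub, sub_nonneg, Algebra.algebraMap_eq_smul_one,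
    Matrix.smul_mulVec, Matrix.one_mulVec, dotProduct_smul, smul_eq_mul] at hnonneg
  simpa only [dotProduct, pow_two] using! hnonneg

variable {R : Type*} [CommSemiring R]

/-- The quadratic form `xᵗAx` of a square matrix `A`, as a polynomial in the coordinates of `x`, so
that it can be differentiated with `pderiv`. There is no factor `½`, which keeps it meaningful over
every commutative semiring; the function `½xᵗAx` is obtained from the matrix `½A`. -/
def quadPoly (A : Matrix ι ι R) : MvPolynomial ι R :=
  ∑ i, ∑ j, C (A i j) * X i * X j

theorem eval_quadPoly (A : Matrix ι ι R) (x : ι → R) :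
    eval x (quadPoly A) = x ⬝ᵥ A.mulVec x := by
  simp [quadPoly, dotProduct, Matrix.mulVec, Finset.mul_sum, mul_left_comm, mul_comm]

theorem pderiv_quadPoly (A : Matrix ι ι R) (a : ι) :
    pderiv a (quadPoly A) = ∑ b, C (A a b + A b a) * X b := by
  classical
  have hterm (i j : ι) : pderiv a (C (A i j) * X i * X j) =
      (if i = a then C (A i j) * X j else 0) + if j = a then C (A i j) * X i else 0 := by
    simp only [pderiv_mul, pderiv_C, pderiv_X, Pi.single_apply]
    split_ifs <;> simp_all
  simp [quadPoly, hterm, Finset.sum_add_distrib, add_mul]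

theorem pderiv_quadPoly_half {A : Matrix ι ι ℝ} (hA : A.IsSymm) (a : ι) :
    pderiv a (quadPoly ((1 / 2 : ℝ) • A)) = ∑ b, C (A a b) * X b := by
  simp_rw [pderiv_quadPoly, Matrix.smul_apply, hA.apply a, smul_eq_mul, ← add_mul, add_halves,
    one_mul]

theorem exists_pos_forall_eval_quadPoly_half_le {A : Matrix ι ι ℝ} (hneg : (-A).PosDef) :
    ∃ c : ℝ, 0 < c ∧ ∀ x, eval x (quadPoly ((1 / 2 : ℝ) • A)) ≤ -(c * ∑ i, x i ^ 2) := by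
  obtain ⟨c, hc, hle⟩ := exists_pos_forall_mul_sum_sq_le_of_posDef hneg
  refine ⟨c / 2, half_pos hc, fun x ↦ ?_⟩
  have hlex := hle x
  rw [Matrix.neg_mulVec, dotProduct_neg] at hlex
  rw [eval_quadPoly, Matrix.smul_mulVec, dotProduct_smul, smul_eq_mul]
  linarith

end Quadratic

theorem gaussian_integration_by_parts_vanishes_general {ι : Type*} [Fintype ι]
    (q : MvPolynomial ι ℝ) {b c : ℝ} (hc : 0 < c)
    (hq : ∀ x, eval x q ≤ b - c * ∑ i, x i ^ 2) (h : MvPolynomial ι ℝ) (a : ι) :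
    Integrable (fun x : ι → ℝ ↦
      eval x (pderiv a h + pderiv a q * h) * Real.exp (eval x q)) ∧
    ∫ x : ι → ℝ, eval x (pderiv a h + pderiv a q * h) * Real.exp (eval x q) = 0 := by
  classical
  have hint := integrable_eval_mul_exp_of_le_sub_mul_sum_sq
    (continuous_eval q).aestronglyMeasurable hc hq
  exact ⟨hint _, integral_eq_zero_of_hasLineDerivAt (hint h) (hint _)
    (hasLineDerivAt_eval_mul_exp_eval h q a)⟩

theorem quadFun_eq_eval {n : ℕ} (A : Matrix (Fin n) (Fin n) ℝ) (x : Fin n → ℝ) :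
    quadFun A x = eval x (quadPoly ((1 / 2 : ℝ) • A)) := by
  simp [quadFun, quadPoly, Finset.mul_sum, div_eq_inv_mul, mul_assoc]

/-- Let `A` be a real symmetric negative definite `n×n` matrix
and `f(x) = ½xᵗAx`.  For every polynomial `h ∈ ℝ[x_1,…,x_n]` and every index
`a`, the function `(∂h/∂x_a + (Σ_b A_{ab}x_b)·h)·e^{f(x)}` is integrable on
`ℝⁿ` and its integral vanishes: the functional `g ↦ ∫ g e^f dx` vanishes on
every element of the form `∂_a h + (∂_a f)·h`. -/
theorem gaussian_integration_by_parts_vanishes {n : ℕ} (hn : 0 < n)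
    (A : Matrix (Fin n) (Fin n) ℝ) (hA : A.IsSymm) (hneg : (-A).PosDef)
    (h : MvPolynomial (Fin n) ℝ) (a : Fin n) :
    Integrable (fun x : Fin n → ℝ =>
      eval x (pderiv a h + (∑ b, C (A a b) * X b) * h) *
        Real.exp (quadFun A x)) ∧
    ∫ x : Fin n → ℝ,
      eval x (pderiv a h + (∑ b, C (A a b) * X b) * h) *
        Real.exp (quadFun A x) = 0 := by
  obtain ⟨c, hc, hle⟩ := exists_pos_forall_eval_quadPoly_half_le hneg
  simp only [quadFun_eq_eval, ← pderiv_quadPoly_half hA]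
  exact gaussian_integration_by_parts_vanishes_general _ (b := 0) hc (by simpa only [zero_sub]) h a

end
end

section
/- Let A be a real symmetric negative definite invertible n×n matrix and let f(x) = ½xᵗAx. Then for every polynomial g ∈ ℝ[x_1,…,x_n] and every index k, ∫_{ℝⁿ} x_k·g(x)·e^{½xᵗAx} dx = −Σ_a (A^{-1})_{ka} ∫_{ℝⁿ} (∂g/∂x_a)(x)·e^{½xᵗAx} dx. -/
open MvPolynomial MeasureTheory

noncomputable section

/-!
Integration by parts moves the derivative of `g` along `v` onto the weight `e^f`, whose derivative
along `v` is `(vᵗAx)·e^f` by symmetry of `A`. The `k`-th row of `A⁻¹`, taken as `v`, makes `vᵗAx`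
equal to `x_k`. There is no boundary term because `½xᵗAx ≤ -c|x|²` for some `c > 0`, so that
polynomials times `e^f` are integrable.
-/

open Real
open scoped Matrix

section NontriviallyNormedField

variable {𝕜 ι : Type*} [NontriviallyNormedField 𝕜] [Fintype ι]

lemma hasFDerivAt_mvPolynomial_eval (p : MvPolynomial ι 𝕜) (x : ι → 𝕜) :
    HasFDerivAt (fun y => eval y p)
      (∑ a, eval x (pderiv a p) • (ContinuousLinearMap.proj a : (ι → 𝕜) →L[𝕜] 𝕜)) x := by
  classical
  induction p using MvPolynomial.induction_on with
  | C r =>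
    simp only [eval_C]
    refine (hasFDerivAt_const r x).congr_fderiv ?_
    ext v
    simp
  | add p q hp hq =>
    simp only [map_add]
    refine (hp.fun_add hq).congr_fderiv ?_
    ext v
    simp [add_mul, Finset.sum_add_distrib]
  | mul_X p i hp =>
    simp only [map_mul, eval_X]
    refine (hp.fun_mul (hasFDerivAt_apply i x)).congr_fderiv ?_
    ext v
    simp [pderiv_X, Pi.single_apply, add_mul, Finset.sum_add_distrib, Finset.mul_sum, mul_assoc,
      apply_ite]

lemma fderiv_mvPolynomial_eval_single {ι : Type*} [Finite ι] [DecidableEq ι] (p : MvPolynomial ι 𝕜)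
    (x : ι → 𝕜) (a : ι) :
    fderiv 𝕜 (fun y => eval y p) x (Pi.single a 1) = eval x (pderiv a p) := by
  cases nonempty_fintype ι
  simp [(hasFDerivAt_mvPolynomial_eval p x).fderiv, Pi.single_apply]

lemma hasLineDerivAt_dotProduct_mulVec_self (A : Matrix ι ι 𝕜) (x v : ι → 𝕜) :
    HasLineDerivAt 𝕜 (fun y => y ⬝ᵥ A *ᵥ y) (v ⬝ᵥ A *ᵥ x + x ⬝ᵥ A *ᵥ v) x v := by
  have hexpand : HasDerivAt
      (fun t : 𝕜 => x ⬝ᵥ A *ᵥ x + t * (v ⬝ᵥ A *ᵥ x + x ⬝ᵥ A *ᵥ v) + t ^ 2 * (v ⬝ᵥ A *ᵥ v))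
      (v ⬝ᵥ A *ᵥ x + x ⬝ᵥ A *ᵥ v) 0 := by
    simpa using (((hasDerivAt_id (0 : 𝕜)).mul_const _).const_add _).fun_add
      ((hasDerivAt_pow 2 (0 : 𝕜)).mul_const _)
  refine hexpand.congr_of_eventuallyEq (.of_forall fun t => ?_)
  simp only [Matrix.mulVec_add, Matrix.mulVec_smul, add_dotProduct, dotProduct_add,
    smul_dotProduct, dotProduct_smul, smul_eq_mul]
  ring

end NontriviallyNormedField

variable {ι E : Type*} [Fintype ι] [NormedAddCommGroup E] [NormedSpace ℝ E] {A : Matrix ι ι ℝ}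

/-- The (unnormalised) Gaussian density `exp (½xᵗAx)` on `ℝ^ι`, with no minus sign in the exponent:
it is integrable when `A` is negative definite. -/
def gaussianWeight (A : Matrix ι ι ℝ) (x : ι → ℝ) : ℝ :=
  exp (x ⬝ᵥ A *ᵥ x / 2)

open scoped MatrixOrder Matrix.Norms.L2Operator in
lemma exists_pos_mul_dotProduct_self_le_of_posDef (hA : A.PosDef) :
    ∃ c > 0, ∀ x, c * (x ⬝ᵥ x) ≤ x ⬝ᵥ A *ᵥ x := by
  classical
  obtain ⟨c, hc, hcA⟩ : ∃ c > 0, algebraMap ℝ (Matrix ι ι ℝ) c ≤ A := by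
    cases isEmpty_or_nonempty ι
    · exact ⟨1, one_pos, (Subsingleton.elim _ _).le⟩
    · rw [CFC.exists_pos_algebraMap_le_iff hA.isHermitian.isSelfAdjoint]
      intro x hx
      exact hA.isStrictlyPositive.spectrum_pos hx
  refine ⟨c, hc, fun x => ?_⟩
  simpa [Algebra.algebraMap_eq_smul_one, Matrix.sub_mulVec, Matrix.smul_mulVec] using
    (Matrix.le_iff.1 hcA).dotProduct_mulVec_nonneg x

lemma integrable_eval_mul_exp_neg_mul_dotProduct_self {c : ℝ} (hc : 0 < c)
    (p : MvPolynomial ι ℝ) : Integrable fun x => eval x p * exp (-c * (x ⬝ᵥ x)) := by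
  induction p using MvPolynomial.induction_on' with
  | add p q hp hq => simpa only [map_add, add_mul] using hp.fun_add hq
  | monomial m r =>
    have hcoord (i : ι) : Integrable fun t : ℝ => t ^ m i * exp (-c * t ^ 2) := by
      simpa using integrable_rpow_mul_exp_neg_mul_sq hc
        (neg_one_lt_zero.trans_le (Nat.cast_nonneg (m i)))
    refine ((Integrable.fintype_prod hcoord).const_mul r).congr (.of_forall fun x => ?_)
    simp [eval_monomial, Finsupp.prod_fintype, Finset.prod_mul_distrib, ← exp_sum, dotProduct,
      Finset.mul_sum, pow_two, mul_assoc]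

lemma integrable_gaussianWeight_mul_eval (hA : (-A).PosDef) (p : MvPolynomial ι ℝ) :
    Integrable fun x => gaussianWeight A x * eval x p := by
  obtain ⟨c, hc, hcA⟩ := exists_pos_mul_dotProduct_self_le_of_posDef hA
  have hcont : Continuous (gaussianWeight A) := by
    unfold gaussianWeight
    fun_prop
  have hle (x : ι → ℝ) : gaussianWeight A x ≤ exp (-(c / 2) * (x ⬝ᵥ x)) := by
    have hcx := hcA x
    rw [Matrix.neg_mulVec, dotProduct_neg] at hcx
    exact exp_le_exp.2 (by linarith)
  refine (integrable_eval_mul_exp_neg_mul_dotProduct_self (half_pos hc) p).mono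
    (hcont.mul p.continuous_eval).aestronglyMeasurable (.of_forall fun x => ?_)
  rw [mul_comm, norm_mul, norm_mul]
  gcongr
  simpa only [gaussianWeight, norm_eq_abs, abs_exp] using hle x

lemma hasLineDerivAt_gaussianWeight (hA : A.IsSymm) (x v : ι → ℝ) :
    HasLineDerivAt ℝ (gaussianWeight A) (gaussianWeight A x * (v ⬝ᵥ A *ᵥ x)) x v := by
  have hcomm : x ⬝ᵥ A *ᵥ v = v ⬝ᵥ A *ᵥ x := by
    rw [dotProduct_comm, ← Matrix.vecMul_transpose, hA.eq, Matrix.dotProduct_mulVec]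
  have hquad := hasLineDerivAt_dotProduct_mulVec_self A x v
  unfold HasLineDerivAt at hquad ⊢
  simpa [gaussianWeight, hcomm] using (hquad.div_const 2).exp

lemma integral_gaussianWeight_smul_dotProduct_mulVec_smul (hA : A.IsSymm) {v : ι → ℝ}
    {g g' : (ι → ℝ) → E} (hg : ∀ x, HasLineDerivAt ℝ g (g' x) x v)
    (hint : Integrable fun x => gaussianWeight A x • g x)
    (hint_mul : Integrable fun x => gaussianWeight A x • (v ⬝ᵥ A *ᵥ x) • g x)
    (hint_deriv : Integrable fun x => gaussianWeight A x • g' x) :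
    ∫ x, gaussianWeight A x • (v ⬝ᵥ A *ᵥ x) • g x = -∫ x, gaussianWeight A x • g' x := by
  simp only [smul_smul] at hint_mul ⊢
  rw [← neg_eq_iff_eq_neg]
  exact (integral_bilinear_hasLineDerivAt_right_eq_neg_left_of_integrable
    (B := ContinuousLinearMap.lsmul ℝ ℝ) hint_mul hint_deriv hint
    (fun x _ => hasLineDerivAt_gaussianWeight hA x v) fun x _ => hg x).symm

lemma inv_row_dotProduct_mulVec {R : Type*} [CommRing R] [DecidableEq ι] {M : Matrix ι ι R}
    (hM : IsUnit M) (k : ι) (x : ι → R) : M⁻¹.row k ⬝ᵥ M *ᵥ x = x k := by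
  change (M⁻¹ *ᵥ M *ᵥ x) k = x k
  rw [Matrix.mulVec_mulVec, Matrix.nonsing_inv_mul M (M.isUnit_iff_isUnit_det.1 hM),
    Matrix.one_mulVec]

theorem gaussian_momentum_identity_general [DecidableEq ι] (hA : A.IsSymm) (hunit : IsUnit A)
    {g : (ι → ℝ) → E} (hg : Differentiable ℝ g) (k : ι)
    (hint : Integrable fun x => gaussianWeight A x • g x)
    (hint_mul : Integrable fun x => gaussianWeight A x • x k • g x)
    (hint_deriv : ∀ a, Integrable fun x => gaussianWeight A x • fderiv ℝ g x (Pi.single a 1)) :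
    ∫ x, gaussianWeight A x • x k • g x =
      -∑ a, A⁻¹ k a • ∫ x, gaussianWeight A x • fderiv ℝ g x (Pi.single a 1) := by
  have hderiv (x : ι → ℝ) : gaussianWeight A x • fderiv ℝ g x (A⁻¹.row k) =
      ∑ a, A⁻¹ k a • gaussianWeight A x • fderiv ℝ g x (Pi.single a 1) := by
    rw [pi_eq_sum_univ' (A⁻¹.row k)]
    simp only [map_sum, map_smul, Finset.smul_sum, smul_comm (gaussianWeight A x), Matrix.row]
  have hint_term (a : ι) := (hint_deriv a).fun_smul (A⁻¹ k a)
  have hparts := integral_gaussianWeight_smul_dotProduct_mulVec_smul hA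
    (fun x => (hg x).hasFDerivAt.hasLineDerivAt (A⁻¹.row k)) hint
    (by simpa only [inv_row_dotProduct_mulVec hunit] using hint_mul)
    (by simpa only [hderiv] using integrable_finsetSum _ fun a _ => hint_term a)
  simp only [inv_row_dotProduct_mulVec hunit, hderiv] at hparts
  rw [hparts, integral_finsetSum _ fun a _ => hint_term a]
  simp only [integral_smul]

lemma exp_quadFun {n : ℕ} (A : Matrix (Fin n) (Fin n) ℝ) (x : Fin n → ℝ) :
    exp (quadFun A x) = gaussianWeight A x := by
  simp only [quadFun, gaussianWeight, dotProduct, Matrix.mulVec, Finset.mul_sum, mul_left_comm,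
    mul_assoc]

/-- Let `A` be a real symmetric negative definite (hence
invertible) `n×n` matrix and `f(x) = ½xᵗAx`.  For every polynomial
`g ∈ ℝ[x_1,…,x_n]` and every index `k`,
`∫ x_k·g·e^f dx = −Σ_a (A⁻¹)_{ka} ∫ (∂g/∂x_a)·e^f dx`. -/
theorem gaussian_momentum_identity {n : ℕ} (hn : 0 < n)
    (A : Matrix (Fin n) (Fin n) ℝ) (hA : A.IsSymm) (hneg : (-A).PosDef)
    (g : MvPolynomial (Fin n) ℝ) (k : Fin n) :
    ∫ x : Fin n → ℝ, x k * eval x g * Real.exp (quadFun A x) =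
      -∑ a, A⁻¹ k a * ∫ x : Fin n → ℝ,
        eval x (pderiv a g) * Real.exp (quadFun A x) := by
  have hunit : IsUnit A := (IsUnit.neg_iff A).1 hneg.isUnit
  have hint := integrable_gaussianWeight_mul_eval hneg
  have hint_mul : Integrable fun x => gaussianWeight A x * (x k * eval x g) := by
    have hint_X_mul := hint (X k * g)
    simpa only [map_mul, eval_X] using hint_X_mul
  have hint_deriv (a : Fin n) : Integrable fun x =>
      gaussianWeight A x * fderiv ℝ (fun y => eval y g) x (Pi.single a 1) := by
    simpa only [fderiv_mvPolynomial_eval_single] using hint (pderiv a g)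
  have hstein := gaussian_momentum_identity_general hA hunit
    (fun x => (hasFDerivAt_mvPolynomial_eval g x).differentiableAt) k (hint g) hint_mul hint_deriv
  simpa only [exp_quadFun, fderiv_mvPolynomial_eval_single, smul_eq_mul,
    mul_comm (gaussianWeight A _)] using hstein

end
end
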